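/- Under Assumptions 1.1, 1.2 and 1.3, there exists a random variable Ĉ₇ with 1 ≤ Ĉ₇ < ∞ everywhere such that, almost surely on Λ, for every real ε > 0: limsup_{n→∞} γ_n^{p̂} u(θ_n) ≤ Ĉ₇ (φ_ε(ξ))^{μ̂}. -/

import Mathlib

open MeasureTheory Filter

/-- Abel summation bound with decreasing nonnegative weights. -/
lemma sg_abel {E : Type*} [NormedAddCommGroup E] [NormedSpace ℝ E]
    (x : ℕ → E) (w : ℕ → ℝ) (B : ℝ) (n m : ℕ) (hnm : n ≤ m)
    (hw : ∀ i, n ≤ i → 0 ≤ w i) (hmono : ∀ i, n ≤ i → w (i + 1) ≤ w i)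
    (hB : ∀ k, n ≤ k → k ≤ m → ‖∑ i ∈ Finset.Ico n k, x i‖ ≤ B) :
    ‖∑ i ∈ Finset.Ico n m, w i • x i‖ ≤ w n * B := by
  have key : ∀ k, n ≤ k → k ≤ m →
      ‖∑ i ∈ Finset.Ico n k, w i • x i - w k • ∑ i ∈ Finset.Ico n k, x i‖ ≤ (w n - w k) * B := by
    intro k hk
    induction k, hk using Nat.le_induction with
    | base => intro _; simp
    | succ k hk ih =>
      intro hkm
      have ih' := ih (by omega)
      have hS := hB (k + 1) (by omega) hkm
      have e : ∑ i ∈ Finset.Ico n (k + 1), w i • x i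
          - w (k + 1) • ∑ i ∈ Finset.Ico n (k + 1), x i
          = (∑ i ∈ Finset.Ico n k, w i • x i - w k • ∑ i ∈ Finset.Ico n k, x i)
            + (w k - w (k + 1)) • ∑ i ∈ Finset.Ico n (k + 1), x i := by
        rw [Finset.sum_Ico_succ_top hk, Finset.sum_Ico_succ_top hk]
        module
      rw [e]
      have h0 : 0 ≤ w k - w (k + 1) := by linarith [hmono k hk]
      calc _ ≤ (w n - w k) * B + ‖(w k - w (k + 1)) • ∑ i ∈ Finset.Ico n (k + 1), x i‖ :=
            (norm_add_le _ _).trans (by gcongr)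
        _ ≤ (w n - w k) * B + (w k - w (k + 1)) * B := by
            rw [norm_smul, Real.norm_of_nonneg h0]; gcongr
        _ = _ := by ring
  have h1 := key m hnm le_rfl
  have h2 := hB m hnm le_rfl
  have e : ∑ i ∈ Finset.Ico n m, w i • x i
      = (∑ i ∈ Finset.Ico n m, w i • x i - w m • ∑ i ∈ Finset.Ico n m, x i)
        + w m • ∑ i ∈ Finset.Ico n m, x i := by module
  rw [e]
  have h0 := hw m hnm
  calc _ ≤ (w n - w m) * B + ‖w m • ∑ i ∈ Finset.Ico n m, x i‖ :=
        (norm_add_le _ _).trans (by gcongr)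
    _ ≤ (w n - w m) * B + w m * B := by
        rw [norm_smul, Real.norm_of_nonneg h0]; gcongr
    _ = _ := by ring

/-- First-order Taylor estimate. -/
lemma sg_descent {E : Type*} [NormedAddCommGroup E] [InnerProductSpace ℝ E] [CompleteSpace E]
    (f : E → ℝ) (hfd : Differentiable ℝ f) (S : Set E) (hS : Convex ℝ S) (L : ℝ) (hL : 0 ≤ L)
    (hlip : ∀ x ∈ S, ∀ y ∈ S, ‖gradient f x - gradient f y‖ ≤ L * ‖x - y‖)
    (x y : E) (hx : x ∈ S) (hy : y ∈ S) :
    f y ≤ f x + inner ℝ (gradient f x) (y - x) + L * ‖y - x‖ ^ 2 := by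
  have hseg : segment ℝ x y ⊆ S := hS.segment_subset hx hy
  have h := Convex.norm_image_sub_le_of_norm_fderiv_le' (𝕜 := ℝ) (f := f) (s := segment ℝ x y)
    (x := x) (y := y) (φ := fderiv ℝ f x) (C := L * ‖y - x‖) (fun z _ => hfd z) (by
      intro z hz
      rw [← toDual_gradient, ← toDual_gradient, ← map_sub, LinearIsometryEquiv.norm_map]
      refine (hlip z (hseg hz) x hx).trans ?_
      gcongr
      have := norm_sub_le_of_mem_segment hz
      simpa using this) (convex_segment x y) (left_mem_segment ℝ x y) (right_mem_segment ℝ x y)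
  have e : (fderiv ℝ f x) (y - x) = inner ℝ (gradient f x) (y - x) := by
    rw [← toDual_gradient, InnerProductSpace.toDual_apply_apply]
  rw [e, Real.norm_eq_abs] at h
  have := (abs_le.1 h).2
  nlinarith

/-- One-window inequality. -/
lemma sg_window {E : Type*} [NormedAddCommGroup E] [InnerProductSpace ℝ E] [CompleteSpace E]
    (f : E → ℝ) (hfd : Differentiable ℝ f) (S : Set E) (hS : Convex ℝ S) (L : ℝ) (hL : 0 ≤ L)
    (hlip : ∀ x ∈ S, ∀ y ∈ S, ‖gradient f x - gradient f y‖ ≤ L * ‖x - y‖)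
    (α : ℕ → ℝ) (hα : ∀ n, 0 < α n) (θ ξ : ℕ → E) (hθ : ∀ n, θ n ∈ S)
    (hrec : ∀ n, θ (n + 1) = θ n - α n • (gradient f (θ n) + ξ n))
    (t η : ℝ) (hLt : L * t ≤ 1 / 20) (hη : 0 ≤ η) (n m : ℕ) (hnm : n ≤ m)
    (hs : ∑ i ∈ Finset.Ico n m, α i ≤ t)
    (hN : ∀ k, n ≤ k → k ≤ m → ‖∑ i ∈ Finset.Ico n k, α i • ξ i‖ ≤ η) :
    f (θ m) ≤ f (θ n) - (∑ i ∈ Finset.Ico n m, α i) / 2 * ‖gradient f (θ n)‖ ^ 2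
      + 2 * η * ‖gradient f (θ n)‖ + 8 * L * η ^ 2 := by
  set s := ∑ i ∈ Finset.Ico n m, α i with hsdef
  set g := gradient f (θ n) with hg
  set G := ‖g‖ with hG
  have hG0 : 0 ≤ G := norm_nonneg _
  have hs0 : 0 ≤ s := Finset.sum_nonneg fun i _ => (hα i).le
  have hLs : L * s ≤ 1 / 20 := (mul_le_mul_of_nonneg_left hs hL).trans hLt
  have hrepr : ∀ k, n ≤ k → θ k - θ n + (∑ i ∈ Finset.Ico n k, α i) • g
      = -(∑ i ∈ Finset.Ico n k, α i • (gradient f (θ i) - g))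
        - ∑ i ∈ Finset.Ico n k, α i • ξ i := by
    intro k hk
    induction k, hk using Nat.le_induction with
    | base => simp
    | succ k hk ih =>
      rw [Finset.sum_Ico_succ_top hk, Finset.sum_Ico_succ_top hk, Finset.sum_Ico_succ_top hk, hrec k]
      have : θ k - α k • (gradient f (θ k) + ξ k) - θ n + (∑ i ∈ Finset.Ico n k, α i + α k) • g
        = (θ k - θ n + (∑ i ∈ Finset.Ico n k, α i) • g) - α k • (gradient f (θ k) - g)
          - α k • ξ k := by module
      rw [this, ih]; abel
  have hsk : ∀ k, n ≤ k → k ≤ m → ∑ i ∈ Finset.Ico n k, α i ≤ s := fun k _ hk =>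
    Finset.sum_le_sum_of_subset_of_nonneg (Finset.Ico_subset_Ico_right hk)
      fun i _ _ => (hα i).le
  set D := 2 * (s * G + η) with hD
  have hD0 : 0 ≤ D := by positivity
  have herr : ∀ k, n ≤ k → k ≤ m → (∀ i, n ≤ i → i < k → ‖θ i - θ n‖ ≤ D) →
      ‖θ k - θ n + (∑ i ∈ Finset.Ico n k, α i) • g‖ ≤ L * s * D + η := by
    intro k hk hkm hi
    rw [hrepr k hk]
    refine (norm_sub_le _ _).trans (add_le_add ?_ (hN k hk hkm))
    rw [norm_neg]
    refine (norm_sum_le _ _).trans ?_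
    calc ∑ i ∈ Finset.Ico n k, ‖α i • (gradient f (θ i) - g)‖
        ≤ ∑ i ∈ Finset.Ico n k, α i * (L * D) := by
          refine Finset.sum_le_sum fun i hi' => ?_
          rw [Finset.mem_Ico] at hi'
          rw [norm_smul, Real.norm_of_nonneg (hα i).le]
          have h1 := hlip _ (hθ i) _ (hθ n)
          have h2 := hi i hi'.1 hi'.2
          have := (hα i).le
          gcongr
          exact h1.trans (by gcongr)
      _ = (∑ i ∈ Finset.Ico n k, α i) * (L * D) := by rw [Finset.sum_mul]
      _ ≤ s * (L * D) := by gcongr; exact hsk k hk hkm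
      _ = _ := by ring
  have hDk : ∀ k, n ≤ k → k ≤ m → ‖θ k - θ n‖ ≤ D := by
    intro k
    induction k using Nat.strong_induction_on with
    | _ k ih =>
      intro hk hkm
      have h1 := herr k hk hkm (fun i hi hik => ih i hik hi (by omega))
      have h2 : ‖θ k - θ n‖ ≤ ‖θ k - θ n + (∑ i ∈ Finset.Ico n k, α i) • g‖
          + ‖(∑ i ∈ Finset.Ico n k, α i) • g‖ := by
        have := norm_sub_le (θ k - θ n + (∑ i ∈ Finset.Ico n k, α i) • g)
          ((∑ i ∈ Finset.Ico n k, α i) • g)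
        simpa using this
      have h3 : ‖(∑ i ∈ Finset.Ico n k, α i) • g‖ ≤ s * G := by
        rw [norm_smul, Real.norm_of_nonneg (Finset.sum_nonneg fun i _ => (hα i).le)]
        gcongr; exact hsk k hk hkm
      have h4 : L * s * D ≤ 1 / 20 * D := by gcongr
      linarith
  have hfin := herr m hnm le_rfl (fun i hi him => hDk i hi him.le)
  have hDm := hDk m hnm le_rfl
  have hdes := sg_descent f hfd S hS L hL hlip (θ n) (θ m) (hθ n) (hθ m)
  rw [← hsdef] at hfin
  rw [← hg] at hdes
  have hin : inner ℝ g (θ m - θ n) ≤ - s * G ^ 2 + G * (L * s * D + η) := by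
    have e : θ m - θ n = (θ m - θ n + s • g) - s • g := by module
    rw [e, inner_sub_right, inner_smul_right, real_inner_self_eq_norm_sq]
    have := (real_inner_le_norm g (θ m - θ n + s • g)).trans
      (mul_le_mul_of_nonneg_left hfin (norm_nonneg _))
    simp only [← hG] at this ⊢
    linarith
  have hsq : ‖θ m - θ n‖ ^ 2 ≤ D ^ 2 := by gcongr
  have hsq' : L * ‖θ m - θ n‖ ^ 2 ≤ L * D ^ 2 := by gcongr
  have hDD : L * D ^ 2 ≤ 8 * (L * s) * (s * G ^ 2) + 8 * L * η ^ 2 := by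
    have : D ^ 2 ≤ 8 * (s * G) ^ 2 + 8 * η ^ 2 := by rw [hD]; nlinarith [sq_nonneg (s * G - η)]
    calc L * D ^ 2 ≤ L * (8 * (s * G) ^ 2 + 8 * η ^ 2) := by gcongr
      _ = _ := by ring
  have h5 : G * (L * s * D + η) = 2 * (L * s) * (s * G ^ 2) + (2 * (L * s) + 1) * (η * G) := by
    rw [hD]; ring
  have h6 : (L * s) * (s * G ^ 2) ≤ 1 / 20 * (s * G ^ 2) := by gcongr
  have h7 : (L * s) * (η * G) ≤ 1 / 20 * (η * G) := by gcongr
  have h8 : 0 ≤ η * G := by positivity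
  nlinarith

lemma sg_back (γ α : ℕ → ℝ) (hγ : ∀ n, γ n = ∑ i ∈ Finset.range n, α i) (t : ℝ) (ht : 0 < t)
    (N m : ℕ) (hNm : N ≤ m) (hα : ∀ i, N ≤ i → α i ≤ t / 2) (hgap : t < γ m - γ N) :
    ∃ n, N ≤ n ∧ n < m ∧ t / 2 ≤ γ m - γ n ∧ γ m - γ n ≤ t := by
  classical
  have hex : ∃ n, N ≤ n ∧ γ m - γ n ≤ t := ⟨m, hNm, by simpa using ht.le⟩
  obtain ⟨h1, h2⟩ := Nat.find_spec hex
  set n := Nat.find hex with hn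
  have hnN : n ≠ N := by intro h; rw [h] at h2; linarith
  obtain ⟨j, hj⟩ : ∃ j, n = j + 1 := ⟨n - 1, by omega⟩
  have hmin := Nat.find_min hex (m := j) (by omega)
  have hjN : N ≤ j := by omega
  have h3 : t < γ m - γ j := by
    by_contra h; exact hmin ⟨hjN, not_lt.1 h⟩
  have h4 : γ (j + 1) = γ j + α j := by rw [hγ, hγ, Finset.sum_range_succ]
  have h5 := hα j hjN
  have h6 : t / 2 ≤ γ m - γ n := by rw [hj, h4]; linarith
  refine ⟨n, h1, ?_, h6, h2⟩
  have : n ≤ m := Nat.find_min' hex ⟨hNm, by simpa using ht.le⟩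
  rcases this.lt_or_eq with h | h
  · exact h
  · rw [h] at h6; linarith

lemma sg_pow (x y t p : ℝ) (hx : 0 < x) (hxy : x ≤ y) (hyt : y - x ≤ t) (hp : 0 ≤ p) :
    x ^ (-p) * (1 - p * t / x) ≤ y ^ (-p) := by
  have hy : 0 < y := hx.trans_le hxy
  have e : y ^ (-p) = x ^ (-p) * (y / x) ^ (-p) := by
    rw [← Real.mul_rpow hx.le (by positivity)]
    congr 1; field_simp
  rw [e]
  have hx' : 0 ≤ x ^ (-p) := by positivity
  refine mul_le_mul_of_nonneg_left ?_ hx'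
  have hyx : 0 < y / x := by positivity
  rw [Real.rpow_def_of_pos hyx]
  have h1 := Real.add_one_le_exp (Real.log (y / x) * -p)
  have h2 := Real.log_le_sub_one_of_pos hyx
  have h3 : y / x - 1 ≤ t / x := by rw [div_sub_one hx.ne']; gcongr
  have h4 : p * Real.log (y / x) ≤ p * (t / x) := by gcongr; linarith
  have h5 : p * t / x = p * (t / x) := by ring
  linarith

lemma sg_mono (x y c β : ℝ) (hx : 0 ≤ x) (hxy : x ≤ y) (hy : y ≤ 1) (hc : 0 ≤ c)
    (hβ : 1 ≤ β) (hcβ : c * β ≤ 1) : x - c * x ^ β ≤ y - c * y ^ β := by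
  rcases eq_or_lt_of_le (hx.trans hxy) with h | h
  · have : x = 0 := by linarith
    rw [this, ← h]
  have hb := one_add_mul_self_le_rpow_one_add (s := x / y - 1) (by
    have : 0 ≤ x / y := by positivity
    linarith) hβ
  have e : 1 + (x / y - 1) = x / y := by ring
  rw [e, Real.div_rpow hx h.le] at hb
  have hyb : 0 < y ^ β := by positivity
  have hyb1 : y ^ β ≤ y := by
    have := Real.rpow_le_rpow_of_exponent_ge h hy hβ
    simpa using this
  rw [le_div_iff₀ hyb] at hb
  have h2 : y ^ β - x ^ β ≤ β * (1 - x / y) * y ^ β := by linarith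
  have h3 : 0 ≤ 1 - x / y := by rw [sub_nonneg, div_le_one h]; exact hxy
  have h4 : β * (1 - x / y) * y ^ β ≤ β * (1 - x / y) * y := by gcongr
  have h5 : β * (1 - x / y) * y = β * (y - x) := by field_simp
  have h6 : c * (y ^ β - x ^ β) ≤ c * (β * (y - x)) := by
    gcongr
    linarith
  have h7 : c * (β * (y - x)) ≤ 1 * (y - x) := by
    rw [← mul_assoc]; gcongr
  linarith

lemma sg_compare (γ α : ℕ → ℝ) (hγ : ∀ n, γ n = ∑ i ∈ Finset.range n, α i)
    (hαpos : ∀ n, 0 < α n) (hα0 : Tendsto α atTop (nhds 0)) (hγt : Tendsto γ atTop atTop)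
    (u : ℕ → ℝ) (t c D r q K μ : ℝ) (ht : 0 < t) (hc : 0 < c) (hc1 : c ≤ 1 / 2)
    (hq : 0 < q) (hqr : q ≤ r) (hK : 0 < K) (hμ : 1 < μ) (hμ2 : μ ≤ 2)
    (hu : ∀ δ : ℝ, 0 < δ → ∀ᶠ n in atTop, u n ≤ δ)
    (hstep : ∀ᶠ N in atTop, ∀ n, N ≤ n → ∀ m, n ≤ m → t / 2 ≤ γ m - γ n → γ m - γ n ≤ t →
      u m ≤ max (u n) 0 - c * (max (u n) 0) ^ (2 / μ) + D * γ n ^ (-(2 * r)))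
    (hK1 : 2 * D ≤ c * K ^ (2 / μ))
    (hK2 : ∀ᶠ n in atTop, t * (μ * q + 1) ≤ c / 2 * K ^ (2 / μ - 1) * γ n ^ (1 - (2 - μ) * q)) :
    ∀ c' : ℝ, K < c' → ∀ᶠ n in atTop, γ n ^ (μ * q) * u n ≤ c' := by
  intro c' hc'
  have hμ0 : 0 < μ := by linarith
  set p := μ * q with hp
  have hp0 : 0 < p := by positivity
  set β := 2 / μ with hβdef
  have hβ1 : 1 ≤ β := by rw [hβdef, le_div_iff₀ hμ0]; linarith
  have hβ2 : β ≤ 2 := by rw [hβdef, div_le_iff₀ hμ0]; linarith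
  have hcβ : c * β ≤ 1 := by nlinarith
  set δ0 : ℝ := 2 ^ (-(p + 1)) / 2 with hδ0
  have hδ0p : 0 < δ0 := by positivity
  have hKt : ∀ᶠ n in atTop, K * γ n ^ (-p) ≤ 1 / 2 := by
    have h := ((tendsto_rpow_neg_atTop hp0).comp hγt).const_mul K
    rw [mul_zero] at h
    exact h.eventually_le_const (by norm_num)
  obtain ⟨N, hN⟩ := eventually_atTop.1
    ((((hstep.and (hu δ0 hδ0p)).and (hK2.and (hα0.eventually_le_const (half_pos ht)))).and
      (hKt.and (hγt.eventually_ge_atTop (max 1 t)))))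
  have hmono : Monotone γ := monotone_nat_of_le_succ fun n => by
    rw [hγ, hγ, Finset.sum_range_succ]; linarith [hαpos n]
  have hγN : ∀ n, N ≤ n → 1 ≤ γ n ∧ t ≤ γ n := fun n hn =>
    ⟨(le_max_left _ _).trans (hN n hn).2.2, (le_max_right _ _).trans (hN n hn).2.2⟩
  have hγN0 : 0 < γ N := by linarith [(hγN N le_rfl).1]
  set A := (2 * γ N) ^ (p + 1) * δ0 with hA
  have hA0 : 0 < A := by positivity
  have hclaim : ∀ m, N ≤ m → u m ≤ K * γ m ^ (-p) + A * γ m ^ (-(p + 1)) := by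
    intro m
    induction m using Nat.strong_induction_on with
    | _ m ih =>
    intro hm
    have hm0 : 0 < γ m := by linarith [(hγN m hm).1]
    by_cases hgap : γ m - γ N ≤ t
    · have h1 : u m ≤ δ0 := (hN m hm).1.1.2
      have h2 : γ m ≤ 2 * γ N := by linarith [(hγN N le_rfl).2]
      have h3 : (2 * γ N) ^ (-(p + 1)) ≤ γ m ^ (-(p + 1)) :=
        Real.rpow_le_rpow_of_nonpos hm0 h2 (by linarith)
      have h4 : δ0 = A * (2 * γ N) ^ (-(p + 1)) := by
        rw [hA, Real.rpow_neg (by positivity)]; field_simp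
      have h5 : δ0 ≤ A * γ m ^ (-(p + 1)) := by rw [h4]; gcongr
      have h6 : 0 ≤ K * γ m ^ (-p) := by positivity
      linarith
    · obtain ⟨n, hNn, hnm, hg1, hg2⟩ := sg_back γ α hγ t ht N m hm
        (fun i hi => (hN i hi).1.2.2) (not_le.1 hgap)
      have hn1 := (hγN n hNn).1
      have hn0 : 0 < γ n := by linarith
      set V := K * γ n ^ (-p) + A * γ n ^ (-(p + 1)) with hV
      have hKV : K * γ n ^ (-p) ≤ V := by
        have : 0 ≤ A * γ n ^ (-(p + 1)) := by positivity
        linarith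
      have hKp : 0 < K * γ n ^ (-p) := by positivity
      have hVp : 0 < V := hKp.trans_le hKV
      have hV1 : V ≤ 1 := by
        have h1 : K * γ n ^ (-p) ≤ 1 / 2 := (hN n hNn).2.1
        have h2 : γ n ^ (-(p + 1)) ≤ γ N ^ (-(p + 1)) :=
          Real.rpow_le_rpow_of_nonpos hγN0 (hmono hNn) (by linarith)
        have h3 : A * γ n ^ (-(p + 1)) ≤ A * γ N ^ (-(p + 1)) := by gcongr
        have h4 : A * γ N ^ (-(p + 1)) = 1 / 2 := by
          rw [hA, hδ0, Real.mul_rpow (by norm_num) hγN0.le, Real.rpow_neg (by norm_num),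
            Real.rpow_neg hγN0.le]
          field_simp
        linarith
      have hun : max (u n) 0 ≤ V := max_le (ih n hnm hNn) hVp.le
      have hs := (hN N le_rfl).1.1.1 n hNn m hnm.le hg1 hg2
      have hm' := sg_mono (max (u n) 0) V c β (le_max_right _ _) hun hV1 hc.le hβ1 hcβ
      have hnoise : D * γ n ^ (-(2 * r)) ≤ c / 2 * V ^ β := by
        have h1 : (K * γ n ^ (-p)) ^ β ≤ V ^ β := by gcongr
        have h2 : (K * γ n ^ (-p)) ^ β = K ^ β * γ n ^ (-(2 * q)) := by
          rw [Real.mul_rpow hK.le (by positivity), ← Real.rpow_mul hn0.le]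
          congr 2
          rw [hp, hβdef]; field_simp
        have h3 : γ n ^ (-(2 * r)) ≤ γ n ^ (-(2 * q)) :=
          Real.rpow_le_rpow_of_exponent_le hn1 (by linarith)
        calc D * γ n ^ (-(2 * r)) ≤ (c * K ^ β / 2) * γ n ^ (-(2 * q)) := by
              gcongr; linarith
          _ = c / 2 * (K * γ n ^ (-p)) ^ β := by rw [h2]; ring
          _ ≤ _ := by gcongr
      have hdec : t * (p + 1) / γ n * V ≤ c / 2 * V ^ β := by
        have h1 : (K * γ n ^ (-p)) ^ (β - 1) ≤ V ^ (β - 1) := by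
          have : 0 ≤ β - 1 := by linarith
          gcongr
        have h2 : (K * γ n ^ (-p)) ^ (β - 1) = K ^ (β - 1) * γ n ^ (-((2 - μ) * q)) := by
          rw [Real.mul_rpow hK.le (by positivity), ← Real.rpow_mul hn0.le]
          congr 2
          rw [hp, hβdef]; field_simp
        have h3 := (hN n hNn).1.2.1
        have h4 : γ n ^ (1 - (2 - μ) * q) = γ n * γ n ^ (-((2 - μ) * q)) := by
          rw [sub_eq_add_neg, Real.rpow_add hn0, Real.rpow_one]
        rw [h4] at h3
        have h5 : t * (p + 1) / γ n ≤ c / 2 * V ^ (β - 1) := by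
          rw [div_le_iff₀ hn0]
          calc t * (p + 1) ≤ c / 2 * K ^ (β - 1) * (γ n * γ n ^ (-((2 - μ) * q))) := h3
            _ = c / 2 * (K * γ n ^ (-p)) ^ (β - 1) * γ n := by rw [h2]; ring
            _ ≤ _ := by gcongr
        have h6 : V ^ β = V ^ (β - 1) * V := by
          rw [Real.rpow_sub_one hVp.ne']; field_simp
        rw [h6, ← mul_assoc]
        gcongr
      have hVm : V - t * (p + 1) / γ n * V ≤ K * γ m ^ (-p) + A * γ m ^ (-(p + 1)) := by
        have h1 := sg_pow (γ n) (γ m) t p hn0 (hmono hnm.le) hg2 hp0.le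
        have h2 := sg_pow (γ n) (γ m) t (p + 1) hn0 (hmono hnm.le) hg2 (by linarith)
        have h3 : γ n ^ (-p) * (1 - (p + 1) * t / γ n) ≤ γ n ^ (-p) * (1 - p * t / γ n) := by
          gcongr; linarith
        have h4 := mul_le_mul_of_nonneg_left (h3.trans h1) hK.le
        have h5 := mul_le_mul_of_nonneg_left h2 hA0.le
        calc _ = K * (γ n ^ (-p) * (1 - (p + 1) * t / γ n))
              + A * (γ n ^ (-(p + 1)) * (1 - (p + 1) * t / γ n)) := by rw [hV]; ring
          _ ≤ _ := add_le_add h4 h5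
      linarith
  have hAt : ∀ᶠ n in atTop, A * γ n ^ (-(1 : ℝ)) ≤ c' - K := by
    have h := ((tendsto_rpow_neg_atTop one_pos).comp hγt).const_mul A
    rw [mul_zero] at h
    exact h.eventually_le_const (by linarith)
  filter_upwards [hAt, eventually_ge_atTop N] with n hn hNn
  have hn0 : 0 < γ n := by linarith [(hγN n hNn).1]
  have h1 := mul_le_mul_of_nonneg_left (hclaim n hNn) (show 0 ≤ γ n ^ p by positivity)
  have h2 : γ n ^ p * (K * γ n ^ (-p) + A * γ n ^ (-(p + 1))) = K + A * γ n ^ (-(1 : ℝ)) := by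
    rw [neg_add, Real.rpow_add hn0, Real.rpow_neg hn0.le p]
    field_simp
  linarith

/-- Convergence of the values: `limsup ≤ f̂` when `f̂` is approached frequently. -/
lemma sg_conv (γ α : ℕ → ℝ) (hγ : ∀ n, γ n = ∑ i ∈ Finset.range n, α i)
    (hαpos : ∀ n, 0 < α n) (hα0 : Tendsto α atTop (nhds 0)) (hγt : Tendsto γ atTop atTop)
    (u : ℕ → ℝ) (t D r : ℝ) (ht : 0 < t) (hD : 0 ≤ D) (hr : 1 < r)
    (hfreq : ∀ δ : ℝ, 0 < δ → ∃ᶠ n in atTop, u n ≤ δ)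
    (hstep : ∀ᶠ N in atTop, ∀ n, N ≤ n → ∀ m, n ≤ m → t / 2 ≤ γ m - γ n → γ m - γ n ≤ t →
      u m ≤ u n + D * γ n ^ (-(2 * r)))
    (hinit : ∀ δ : ℝ, 0 < δ → ∀ᶠ n in atTop, ∀ m, n ≤ m → γ m - γ n ≤ t → u m ≤ u n + δ) :
    ∀ δ : ℝ, 0 < δ → ∀ᶠ n in atTop, u n ≤ δ := by
  intro δ hδ
  have hmono : Monotone γ := monotone_nat_of_le_succ fun n => by
    rw [hγ, hγ, Finset.sum_range_succ]; linarith [hαpos n]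
  set A := 4 * D / t with hA
  have hA0 : 0 ≤ A := by positivity
  have hAt : ∀ᶠ n in atTop, A * (γ n)⁻¹ ≤ δ / 3 := by
    have h := (tendsto_inv_atTop_zero.comp hγt).const_mul A
    rw [mul_zero] at h
    exact h.eventually_le_const (by linarith)
  have hα' : ∀ᶠ N in atTop, ∀ n, N ≤ n → α n ≤ t / 2 :=
    (eventually_forall_ge_atTop.2 (hα0.eventually_le_const (half_pos ht)))
  obtain ⟨N, huN, ⟨hst, hin⟩, hal, hA', hγ1⟩ := ((hfreq (δ / 3) (by linarith)).and_eventually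
    ((hstep.and (hinit (δ / 3) (by linarith))).and
      (hα'.and (hAt.and (hγt.eventually_ge_atTop (max 1 t)))))).exists
  have h1N : 1 ≤ γ N := (le_max_left _ _).trans hγ1
  have htN : t ≤ γ N := (le_max_right _ _).trans hγ1
  have hclaim : ∀ m, N ≤ m → u m ≤ 2 * δ / 3 + A * ((γ N)⁻¹ - (γ m)⁻¹) := by
    intro m
    induction m using Nat.strong_induction_on with
    | _ m ih =>
    intro hm
    have hγm := hmono hm
    by_cases hgap : γ m - γ N ≤ t
    · have h1 := hin m hm hgap
      have h2 : (γ m)⁻¹ ≤ (γ N)⁻¹ := by gcongr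
      have h3 : 0 ≤ A * ((γ N)⁻¹ - (γ m)⁻¹) := mul_nonneg hA0 (by linarith)
      linarith
    · obtain ⟨n, hNn, hnm, hg1, hg2⟩ := sg_back γ α hγ t ht N m hm hal (not_le.1 hgap)
      have hn1 : 1 ≤ γ n := h1N.trans (hmono hNn)
      have hn0 : 0 < γ n := by linarith
      have hm0 : 0 < γ m := by linarith
      have hs := hst n hNn m hnm.le hg1 hg2
      have hi := ih n hnm hNn
      have h1 : γ n ^ (-(2 * r)) ≤ γ n ^ (-2 : ℝ) :=
        Real.rpow_le_rpow_of_exponent_le hn1 (by linarith)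
      have h2 : γ n ^ (-2 : ℝ) = (γ n ^ 2)⁻¹ := by
        rw [Real.rpow_neg hn0.le]; norm_num
      rw [h2] at h1
      have h3 : D * (γ n ^ 2)⁻¹ ≤ A * ((γ n)⁻¹ - (γ m)⁻¹) := by
        have e : (γ n)⁻¹ - (γ m)⁻¹ = (γ m - γ n) / (γ n * γ m) := by field_simp
        have hm2 : γ m ≤ 2 * γ n := by
          have := hmono hNn
          linarith
        calc D * (γ n ^ 2)⁻¹ = A * ((t / 2) / (γ n * (2 * γ n))) := by
              rw [hA]; field_simp; norm_num
          _ ≤ A * ((γ m - γ n) / (γ n * γ m)) := by gcongr; linarith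
          _ = _ := by rw [e]
      have h4 : D * γ n ^ (-(2 * r)) ≤ D * (γ n ^ 2)⁻¹ := by gcongr
      linarith
  filter_upwards [eventually_ge_atTop N] with m hm
  have h1 := hclaim m hm
  have h2 : 0 ≤ (γ m)⁻¹ := by
    have := hmono hm
    exact inv_nonneg.2 (by linarith)
  have h3 : 0 ≤ A * (γ m)⁻¹ := mul_nonneg hA0 h2
  linarith

/-- Deterministic (pathwise) version of the rate estimate. -/
theorem sg_path {E : Type*} [NormedAddCommGroup E] [InnerProductSpace ℝ E] [ProperSpace E]
    [CompleteSpace E]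
    (f : E → ℝ) (hfd : Differentiable ℝ f) (hlip : LocallyLipschitz (fun x => gradient f x))
    (α : ℕ → ℝ) (hαpos : ∀ n, 0 < α n) (θ ξ : ℕ → E)
    (hrec : ∀ n, θ (n + 1) = θ n - α n • (gradient f (θ n) + ξ n))
    (hα0 : Tendsto α atTop (nhds 0))
    (γ : ℕ → ℝ) (hγ : ∀ n, γ n = ∑ i ∈ Finset.range n, α i) (hγt : Tendsto γ atTop atTop)
    (R : ℝ) (hR : ∀ n, ‖θ n‖ ≤ R) (r : ℝ) (hr : 1 < r) (Ξ : ℝ) (hΞ : 0 ≤ Ξ)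
    (hnoise : ∀ B, Ξ < B → ∀ᶠ n in atTop, ∀ m, n ≤ m → γ m - γ n ≤ 1 →
      ‖∑ i ∈ Finset.Ico n m, (α i * γ i ^ r) • ξ i‖ ≤ B)
    (fh : ℝ) (hfreq : ∀ δ : ℝ, 0 < δ → ∃ᶠ n in atTop, f (θ n) - fh ≤ δ)
    (Q : Set E) (hQ : ∀ᶠ n in atTop, θ n ∈ Q) (δ μ M : ℝ) (hδ : 0 < δ) (hμ : 1 < μ) (hμ2 : μ ≤ 2)
    (hM : 1 ≤ M)
    (hLoj : ∀ x ∈ Q, |f x - fh| ≤ δ → |f x - fh| ≤ M * ‖gradient f x‖ ^ μ) :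
    ∃ C : ℝ, 1 ≤ C ∧
      (r * (2 - μ) < 1 → ∀ B, Ξ < B → ∀ c', C * B ^ μ < c' →
        ∀ᶠ n in atTop, γ n ^ (μ * r) * (f (θ n) - fh) ≤ c') ∧
      (1 ≤ r * (2 - μ) → ∀ c', C < c' →
        ∀ᶠ n in atTop, γ n ^ (μ * (1 / (2 - μ))) * (f (θ n) - fh) ≤ c') := by
  have hμ0 : 0 < μ := by linarith
  have hmono : Monotone γ := monotone_nat_of_le_succ fun n => by
    rw [hγ, hγ, Finset.sum_range_succ]; linarith [hαpos n]
  obtain ⟨L', hL'⟩ := (LocallyLipschitz.locallyLipschitzOn (s := Metric.closedBall (0 : E) R)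
    hlip).exists_lipschitzOnWith_of_compact (isCompact_closedBall 0 R)
  set L : ℝ := (L' : ℝ) with hLdef
  have hL : 0 ≤ L := L'.2
  have hlipL : ∀ x ∈ Metric.closedBall (0 : E) R, ∀ y ∈ Metric.closedBall (0 : E) R,
      ‖gradient f x - gradient f y‖ ≤ L * ‖x - y‖ := by
    intro x hx y hy
    have := hL'.dist_le_mul x hx y hy
    rwa [dist_eq_norm, dist_eq_norm] at this
  have hθS : ∀ n, θ n ∈ Metric.closedBall (0 : E) R := fun n => by simpa using hR n
  obtain ⟨Gm, hGm⟩ : ∃ Gm, ∀ n, ‖gradient f (θ n)‖ ≤ Gm := by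
    obtain ⟨Gm, hGm⟩ := (isCompact_closedBall (0 : E) R).exists_bound_of_continuousOn
      hlip.continuous.continuousOn
    exact ⟨Gm, fun n => hGm _ (hθS n)⟩
  have hGm0 : 0 ≤ Gm := (norm_nonneg _).trans (hGm 0)
  set t : ℝ := 1 / (20 * (L + 1)) with ht
  have ht0 : 0 < t := by positivity
  have ht1 : t ≤ 1 := by rw [ht, div_le_one (by positivity)]; linarith
  have hLt : L * t ≤ 1 / 20 := by
    rw [ht, mul_one_div, div_le_div_iff₀ (by positivity) (by norm_num)]; linarith
  -- window inequality
  have hwin : ∀ B, Ξ < B → ∀ᶠ N in atTop, ∀ n, N ≤ n → ∀ m, n ≤ m → γ m - γ n ≤ t →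
      f (θ m) ≤ f (θ n) - (γ m - γ n) / 2 * ‖gradient f (θ n)‖ ^ 2
        + 2 * (B * γ n ^ (-r)) * ‖gradient f (θ n)‖ + 8 * L * (B * γ n ^ (-r)) ^ 2 := by
    intro B hB
    refine eventually_forall_ge_atTop.2 ?_
    filter_upwards [hnoise B hB, hγt.eventually_ge_atTop 1] with n hn hn1 m hm hmt
    have hpos : ∀ i, n ≤ i → 0 < γ i := fun i hi => by linarith [hmono hi]
    have hsum : ∀ k, n ≤ k → ∑ i ∈ Finset.Ico n k, α i = γ k - γ n := fun k hk => by
      rw [Finset.sum_Ico_eq_sub _ hk, hγ, hγ]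
    have hB0 : 0 ≤ B := hΞ.trans hB.le
    have := sg_window f hfd _ (convex_closedBall (0 : E) R) L hL hlipL α hαpos θ ξ hθS hrec
      t (B * γ n ^ (-r)) hLt (mul_nonneg hB0 (Real.rpow_nonneg (hpos n le_rfl).le _)) n m hm
      (by rw [hsum m hm]; exact hmt) (by
        intro k hk hkm
        have h1 := sg_abel (fun i => (α i * γ i ^ r) • ξ i) (fun i => γ i ^ (-r)) B n k hk
          (fun i hi => Real.rpow_nonneg (hpos i hi).le _)
          (fun i hi => Real.rpow_le_rpow_of_nonpos (hpos i hi) (hmono (Nat.le_succ i))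
            (by linarith))
          (fun j hj hjk => hn j hj (by linarith [hmono (hjk.trans hkm)]))
        have h2 : ∑ i ∈ Finset.Ico n k, γ i ^ (-r) • (α i * γ i ^ r) • ξ i
            = ∑ i ∈ Finset.Ico n k, α i • ξ i := by
          refine Finset.sum_congr rfl fun i hi => ?_
          have hi' := hpos i (Finset.mem_Ico.1 hi).1
          rw [smul_smul]
          congr 1
          rw [Real.rpow_neg hi'.le]
          have : γ i ^ r ≠ 0 := (Real.rpow_pos_of_pos hi' r).ne'
          field_simp
        simp only [h2] at h1
        linarith)
    rwa [hsum m hm] at this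
  set C1 : ℝ := 8 / t + 8 * L with hC1
  have hC10 : 0 < C1 := by positivity
  have hwin2 : ∀ B, Ξ < B → ∀ᶠ N in atTop, ∀ n, N ≤ n → ∀ m, n ≤ m → t / 2 ≤ γ m - γ n →
      γ m - γ n ≤ t → f (θ m) ≤ f (θ n) - t / 8 * ‖gradient f (θ n)‖ ^ 2
        + C1 * B ^ 2 * γ n ^ (-(2 * r)) := by
    intro B hB
    filter_upwards [hwin B hB, hγt.eventually_ge_atTop 1] with N hN hN1 n hn m hm h1 h2
    have h := hN n hn m hm h2
    have hn0 : 0 < γ n := by linarith [hmono hn]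
    have e : γ n ^ (-(2 * r)) = (γ n ^ (-r)) ^ 2 := by
      rw [← Real.rpow_natCast, ← Real.rpow_mul hn0.le]; congr 1; push_cast; ring
    set η := B * γ n ^ (-r) with hη
    have e2 : C1 * B ^ 2 * γ n ^ (-(2 * r)) = 8 / t * η ^ 2 + 8 * L * η ^ 2 := by
      rw [e, hη, hC1]; ring
    rw [e2]
    set G := ‖gradient f (θ n)‖ with hG
    have h3 : t / 4 * G ^ 2 ≤ (γ m - γ n) / 2 * G ^ 2 :=
      mul_le_mul_of_nonneg_right (by linarith) (by positivity)
    have h4 : 2 * η * G ≤ t / 8 * G ^ 2 + 8 / t * η ^ 2 := by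
      have e3 : t / 8 * G ^ 2 + 8 / t * η ^ 2 - 2 * η * G = t / 8 * (G - 8 / t * η) ^ 2 := by
        field_simp; ring
      have : 0 ≤ t / 8 * (G - 8 / t * η) ^ 2 := by positivity
      linarith
    linarith
  have hu : ∀ δ : ℝ, 0 < δ → ∀ᶠ n in atTop, f (θ n) - fh ≤ δ := by
    refine sg_conv γ α hγ hαpos hα0 hγt (fun n => f (θ n) - fh) t (C1 * (Ξ + 1) ^ 2) r ht0
      (by positivity) hr hfreq ?_ ?_
    · filter_upwards [hwin2 (Ξ + 1) (by linarith)] with N hN n hn m hm h1 h2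
      have := hN n hn m hm h1 h2
      have h3 : 0 ≤ t / 8 * ‖gradient f (θ n)‖ ^ 2 := by positivity
      linarith
    · intro δ hδ
      have hlim : Tendsto (fun n => 2 * ((Ξ + 1) * γ n ^ (-r)) * Gm
          + 8 * L * ((Ξ + 1) * γ n ^ (-r)) ^ 2) atTop (nhds 0) := by
        have h0 : Tendsto (fun n => (Ξ + 1) * γ n ^ (-r)) atTop (nhds 0) := by
          have := ((tendsto_rpow_neg_atTop (show 0 < r by linarith)).comp hγt).const_mul (Ξ + 1)
          rwa [mul_zero] at this
        have := ((h0.const_mul 2).mul_const Gm).add ((h0.pow 2).const_mul (8 * L))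
        simpa using this
      filter_upwards [hwin (Ξ + 1) (by linarith), hlim.eventually_le_const hδ,
        hγt.eventually_ge_atTop 1] with n hn hl hn1 m hm hmt
      have h := hn n le_rfl m hm hmt
      have h1 : 0 ≤ (γ m - γ n) / 2 * ‖gradient f (θ n)‖ ^ 2 := by
        have := hmono hm
        exact mul_nonneg (by linarith) (by positivity)
      have h2 : 2 * ((Ξ + 1) * γ n ^ (-r)) * ‖gradient f (θ n)‖
          ≤ 2 * ((Ξ + 1) * γ n ^ (-r)) * Gm := by
        have : 0 < γ n := by linarith
        gcongr
        exact hGm n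
      linarith
  set β := 2 / μ with hβ
  have hβ0 : 0 < β := by positivity
  set c := t / 8 / M ^ β with hc
  have hM0 : 0 < M := by linarith
  have hMβ : 1 ≤ M ^ β := Real.one_le_rpow hM hβ0.le
  have hc0 : 0 < c := by positivity
  have hc1 : c ≤ 1 / 2 := by
    rw [hc, div_le_iff₀ (by positivity)]; linarith
  have hstep : ∀ B, Ξ < B → ∀ᶠ N in atTop, ∀ n, N ≤ n → ∀ m, n ≤ m → t / 2 ≤ γ m - γ n →
      γ m - γ n ≤ t → f (θ m) - fh ≤ max (f (θ n) - fh) 0 - c * (max (f (θ n) - fh) 0) ^ β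
        + (C1 * B ^ 2) * γ n ^ (-(2 * r)) := by
    intro B hB
    filter_upwards [hwin2 B hB, eventually_forall_ge_atTop.2 (hu δ hδ),
      eventually_forall_ge_atTop.2 hQ] with N hN hδN hQN n hn m hm h1 h2
    have h := hN n hn m hm h1 h2
    have hG : 0 ≤ t / 8 * ‖gradient f (θ n)‖ ^ 2 := by positivity
    rcases le_or_gt (f (θ n) - fh) 0 with h0 | h0
    · rw [max_eq_right h0, Real.zero_rpow hβ0.ne']
      linarith
    · rw [max_eq_left h0.le]
      have hl := hLoj (θ n) (hQN n hn) (by rw [abs_of_pos h0]; exact hδN n hn)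
      rw [abs_of_pos h0] at hl
      have h3 : (f (θ n) - fh) ^ β ≤ (M * ‖gradient f (θ n)‖ ^ μ) ^ β := by gcongr
      have h4 : (M * ‖gradient f (θ n)‖ ^ μ) ^ β = M ^ β * ‖gradient f (θ n)‖ ^ 2 := by
        rw [Real.mul_rpow hM0.le (by positivity), ← Real.rpow_mul (norm_nonneg _)]
        have : μ * β = (2 : ℕ) := by rw [hβ]; field_simp; norm_num
        rw [this, Real.rpow_natCast]
      have h5 : c * (f (θ n) - fh) ^ β ≤ t / 8 * ‖gradient f (θ n)‖ ^ 2 := by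
        calc _ ≤ c * (M ^ β * ‖gradient f (θ n)‖ ^ 2) := by
              rw [← h4]; gcongr
          _ = _ := by rw [hc]; field_simp
      linarith
  rcases lt_or_ge (r * (2 - μ)) 1 with hcase | hcase
  · refine ⟨max 1 ((2 * C1 / c) ^ (μ / 2)), le_max_left _ _, ?_, fun h => absurd h (not_le.2 hcase)⟩
    intro _ B hB c' hc'
    set C := max 1 ((2 * C1 / c) ^ (μ / 2)) with hC
    have hC0 : 0 < C := lt_of_lt_of_le one_pos (le_max_left _ _)
    have hB0 : 0 < B := hΞ.trans_lt hB
    have hK0 : 0 < C * B ^ μ := by positivity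
    refine sg_compare γ α hγ hαpos hα0 hγt (fun n => f (θ n) - fh) t c (C1 * B ^ 2) r r
      (C * B ^ μ) μ ht0 hc0 hc1 (by linarith) le_rfl hK0 hμ hμ2 hu (hstep B hB) ?_ ?_ c' hc'
    · have h1 : (C * B ^ μ) ^ (2 / μ) = C ^ (2 / μ) * B ^ 2 := by
        rw [Real.mul_rpow hC0.le (by positivity), ← Real.rpow_mul hB0.le]
        have : μ * (2 / μ) = (2 : ℕ) := by field_simp; norm_num
        rw [this, Real.rpow_natCast]
      have h2 : 2 * C1 / c ≤ C ^ (2 / μ) := by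
        have h3 : ((2 * C1 / c) ^ (μ / 2)) ^ (2 / μ) = 2 * C1 / c := by
          rw [← Real.rpow_mul (by positivity)]
          have : μ / 2 * (2 / μ) = 1 := by field_simp
          rw [this, Real.rpow_one]
        rw [← h3]
        have := le_max_right (1 : ℝ) ((2 * C1 / c) ^ (μ / 2))
        exact Real.rpow_le_rpow (by positivity) this (by positivity)
      rw [div_le_iff₀ hc0] at h2
      rw [h1]
      calc 2 * (C1 * B ^ 2) = 2 * C1 * B ^ 2 := by ring
        _ ≤ C ^ (2 / μ) * c * B ^ 2 := by gcongr
        _ = _ := by ring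
    · have hκ : 0 < 1 - (2 - μ) * r := by linarith
      have h1 : 0 < c / 2 * (C * B ^ μ) ^ (2 / μ - 1) := by positivity
      have h2 := ((tendsto_rpow_atTop hκ).comp hγt).const_mul_atTop h1
      exact h2.eventually_ge_atTop _
  · have hμlt : μ < 2 := by
      by_contra h
      have : 2 - μ ≤ 0 := by linarith [not_lt.1 h]
      nlinarith
    have h2μ : 0 < 2 - μ := by linarith
    set q := 1 / (2 - μ) with hq
    have hq0 : 0 < q := by positivity
    have hqr : q ≤ r := by rw [hq, div_le_iff₀ h2μ]; exact hcase
    have hβ1 : 0 < 2 / μ - 1 := by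
      rw [sub_pos, lt_div_iff₀ hμ0]; linarith
    have hT1 := ((tendsto_rpow_atTop hβ0).const_mul_atTop hc0).eventually_ge_atTop
      (2 * (C1 * (Ξ + 1) ^ 2))
    have hT2 := ((tendsto_rpow_atTop hβ1).const_mul_atTop (half_pos hc0)).eventually_ge_atTop
      (t * (μ * q + 1))
    obtain ⟨K, hKa, hKb, hK1⟩ := (hT1.and (hT2.and (eventually_ge_atTop (1 : ℝ)))).exists
    refine ⟨K, hK1, fun h => absurd h (not_lt.2 hcase), ?_⟩
    intro _
    refine sg_compare γ α hγ hαpos hα0 hγt (fun n => f (θ n) - fh) t c (C1 * (Ξ + 1) ^ 2) r q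
      K μ ht0 hc0 hc1 hq0 hqr (by linarith) hμ hμ2 hu (hstep (Ξ + 1) (by linarith)) hKa ?_
    refine Eventually.of_forall fun n => ?_
    have : 1 - (2 - μ) * q = 0 := by rw [hq]; field_simp; norm_num
    rw [this, Real.rpow_zero, mul_one]
    exact hKb

/-- Lemma 1.7 of the paper: under Assumptions 1.1, 1.2, 1.3
there is a random variable `Ĉ₇ ∈ [1,∞)` such that, almost surely on `Λ`, for
every `ε > 0`: `limsup_n γ_n^p̂ u(θ_n) ≤ Ĉ₇ (φ_ε(ξ))^μ̂`.
(`limsup u ≤ c` is expressed as: for every `c' > c`, eventually `u n ≤ c'`.) -/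
theorem stochastic_gradient_limsup_bound
    {d : ℕ} (hd : 1 ≤ d)
    {Ω : Type} [MeasurableSpace Ω] (P : Measure Ω) [IsProbabilityMeasure P]
    (f : EuclideanSpace ℝ (Fin d) → ℝ)
    (hfd : Differentiable ℝ f)
    (hlip : LocallyLipschitz (fun x => gradient f x))
    (α : ℕ → ℝ) (hαpos : ∀ n, 0 < α n)
    (θ ξ : ℕ → Ω → EuclideanSpace ℝ (Fin d))
    (hrec : ∀ n ω, θ (n + 1) ω = θ n ω - α n • (gradient f (θ n ω) + ξ n ω))
    -- Assumption 1.1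
    (hα0 : Tendsto α atTop (nhds 0))
    (γ : ℕ → ℝ) (hγ : ∀ n, γ n = ∑ i ∈ Finset.range n, α i)
    (hαdiv : Tendsto γ atTop atTop)
    -- the interpolation index `a(n,t)`
    (a : ℕ → ℝ → ℕ)
    (ha : ∀ n t, 0 < t → a n t = sSup {k | n ≤ k ∧ γ k - γ n ≤ t})
    -- the event Λ
    (Λ : Set Ω) (hΛ : Λ = {ω | ∃ C, ∀ n, ‖θ n ω‖ ≤ C})
    -- Assumption 1.2
    (r : ℝ) (hr : 1 < r)
    (noise : ℕ → Ω → ℝ)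
    (hnoise : ∀ n ω, noise n ω =
      ⨆ k ∈ Set.Ico n (a n 1), ‖∑ i ∈ Finset.Icc n k, (α i * γ i ^ r) • ξ i ω‖)
    (hA12 : ∀ᵐ ω ∂P, ω ∈ Λ → IsBoundedUnder (· ≤ ·) atTop (fun n => noise n ω))
    (Xi : Ω → ℝ) (hXi : ∀ ω, Xi ω = Filter.limsup (fun n => noise n ω) atTop)
    -- Assumption 1.3 (Łojasiewicz-type gradient inequality, with a choice
    -- `δ_{Q,a}, μ_{Q,a}, M_{Q,a}` of the Łojasiewicz data for each compact `Q`
    -- and each value `a ∈ f(Q)`)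
    (δQ μQ MQ : Set (EuclideanSpace ℝ (Fin d)) → ℝ → ℝ)
    (hLoj : ∀ Q : Set (EuclideanSpace ℝ (Fin d)), IsCompact Q → ∀ b ∈ f '' Q,
      δQ Q b ∈ Set.Ioc (0 : ℝ) 1 ∧ μQ Q b ∈ Set.Ioc (1 : ℝ) 2 ∧ 1 ≤ MQ Q b ∧
      ∀ x ∈ Q, |f x - b| ≤ δQ Q b → |f x - b| ≤ MQ Q b * ‖gradient f x‖ ^ μQ Q b)
    -- the local Łojasiewicz data `δ_θ, μ_θ, M_θ` provided by Assumption 1.3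
    (δl μl Ml : EuclideanSpace ℝ (Fin d) → ℝ)
    (hδl : ∀ x, δl x ∈ Set.Ioc (0 : ℝ) 1)
    (hμl : ∀ x, μl x ∈ Set.Ioc (1 : ℝ) 2)
    (hMl : ∀ x, 1 ≤ Ml x)
    (hLocal : ∀ x y, ‖y - x‖ ≤ δl x → |f y - f x| ≤ Ml x * ‖gradient f y‖ ^ μl x)
    -- `f̂ = liminf_n f(θ_n)`
    (fhat : Ω → ℝ)
    (hfhat : ∀ ω, fhat ω = Filter.liminf (fun n => f (θ n ω)) atTop)
    -- `Â` = set of accumulation points of `{θ_n}`, and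
    -- `Q̂ = cl(⋃_{θ ∈ Â} {θ' : ‖θ' − θ‖ ≤ δ_θ/2})`
    (Ahat : Ω → Set (EuclideanSpace ℝ (Fin d)))
    (hAhat : ∀ ω, Ahat ω = {x | MapClusterPt x atTop (fun n => θ n ω)})
    (Qhat : Ω → Set (EuclideanSpace ℝ (Fin d)))
    (hQhat : ∀ ω, Qhat ω = closure (⋃ x ∈ Ahat ω, Metric.closedBall x (δl x / 2)))
    -- `μ̂ = μ_{Q̂,f̂}`, `r̂ = 1/(2−μ̂)` (`= ∞` if `μ̂ = 2`), `p̂ = μ̂ min{r,r̂}`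
    (μhat : Ω → ℝ) (hμhat : ∀ ω, μhat ω = μQ (Qhat ω) (fhat ω))
    (phat : Ω → ℝ)
    (hphat : ∀ ω, phat ω =
      μhat ω * (if μhat ω < 2 then min r (1 / (2 - μhat ω)) else r))
    -- `φ_ε(ξ) = φ(ξ) + ε` where `φ(ξ) = ξ` if `r < r̂`, `1 + ξ` if `r = r̂`,
    -- and `1` if `r > r̂`
    (φe : Ω → ℝ → ℝ)
    (hφe : ∀ ω ε, φe ω ε =
      (if μhat ω = 2 ∨ r < 1 / (2 - μhat ω) then Xi ω
        else if r = 1 / (2 - μhat ω) then 1 + Xi ω else 1) + ε) :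
    ∃ C₇ : Ω → ℝ, (∀ ω, 1 ≤ C₇ ω) ∧
      ∀ᵐ ω ∂P, ω ∈ Λ → ∀ ε : ℝ, 0 < ε →
        ∀ c : ℝ, C₇ ω * φe ω ε ^ μhat ω < c →
          ∀ᶠ n in atTop, γ n ^ phat ω * (f (θ n ω) - fhat ω) ≤ c := by
  have hmono : Monotone γ := monotone_nat_of_le_succ fun n => by
    rw [hγ, hγ, Finset.sum_range_succ]; linarith [hαpos n]
  have hpath : ∀ ω, ∃ C : ℝ, 1 ≤ C ∧
      (ω ∈ Λ → IsBoundedUnder (· ≤ ·) atTop (fun n => noise n ω) → ∀ ε : ℝ, 0 < ε →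
        ∀ c : ℝ, C * φe ω ε ^ μhat ω < c →
          ∀ᶠ n in atTop, γ n ^ phat ω * (f (θ n ω) - fhat ω) ≤ c) := by
    intro ω
    by_cases hω : ω ∈ Λ ∧ IsBoundedUnder (· ≤ ·) atTop (fun n => noise n ω)
    swap
    · exact ⟨1, le_rfl, fun h1 h2 => absurd ⟨h1, h2⟩ hω⟩
    obtain ⟨hωΛ, hbdd⟩ := hω
    rw [hΛ] at hωΛ
    obtain ⟨R, hR⟩ := hωΛ
    -- noise
    have hn0 : ∀ n, 0 ≤ noise n ω := fun n => by
      rw [hnoise]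
      exact Real.iSup_nonneg fun k => Real.iSup_nonneg fun _ => norm_nonneg _
    have hXi0 : 0 ≤ Xi ω := by
      by_contra h
      rw [hXi] at h
      obtain ⟨n, hn⟩ := (eventually_lt_of_limsup_lt (not_le.1 h) hbdd).exists
      exact absurd (hn0 n) (not_le.2 hn)
    have hnoise' : ∀ n m, n ≤ m → γ m - γ n ≤ 1 →
        ‖∑ i ∈ Finset.Ico n m, (α i * γ i ^ r) • ξ i ω‖ ≤ noise n ω := by
      intro n m hnm hg
      rcases hnm.eq_or_lt with h | h
      · subst h; simpa using hn0 n
      obtain ⟨k, rfl⟩ : ∃ k, m = k + 1 := ⟨m - 1, by omega⟩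
      have hle : k + 1 ≤ a n 1 := by
        rw [ha n 1 one_pos]
        refine le_csSup ?_ ⟨hnm, hg⟩
        obtain ⟨N, hN⟩ := eventually_atTop.1 (hαdiv.eventually_gt_atTop (γ n + 1))
        refine ⟨N, fun j hj => ?_⟩
        by_contra hjN
        have := hN j (not_le.1 hjN).le
        have := hj.2
        linarith
      have hk : k ∈ Set.Ico n (a n 1) := ⟨by omega, by omega⟩
      have hbd : BddAbove (Set.range fun k => ⨆ (_ : k ∈ Set.Ico n (a n 1)),
          ‖∑ i ∈ Finset.Icc n k, (α i * γ i ^ r) • ξ i ω‖) := by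
        refine ⟨∑ k ∈ Finset.Ico n (a n 1),
          ‖∑ i ∈ Finset.Icc n k, (α i * γ i ^ r) • ξ i ω‖, ?_⟩
        rintro _ ⟨j, rfl⟩
        refine Real.iSup_le (fun hj => ?_) (Finset.sum_nonneg fun _ _ => norm_nonneg _)
        exact Finset.single_le_sum
          (f := fun k => ‖∑ i ∈ Finset.Icc n k, (α i * γ i ^ r) • ξ i ω‖)
          (fun _ _ => norm_nonneg _) (Finset.mem_Ico.2 hj)
      rw [hnoise]
      refine le_trans (le_of_eq ?_) (le_ciSup hbd k)
      rw [ciSup_pos hk]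
      congr 2
    have hnz : ∀ B, Xi ω < B → ∀ᶠ n in atTop, ∀ m, n ≤ m → γ m - γ n ≤ 1 →
        ‖∑ i ∈ Finset.Ico n m, (α i * γ i ^ r) • ξ i ω‖ ≤ B := by
      intro B hB
      rw [hXi] at hB
      filter_upwards [eventually_lt_of_limsup_lt hB hbdd] with n hn m hm hg
      exact (hnoise' n m hm hg).trans hn.le
    -- values
    have hcomp := isCompact_closedBall (0 : EuclideanSpace ℝ (Fin d)) R
    have hθS : ∀ n, θ n ω ∈ Metric.closedBall (0 : EuclideanSpace ℝ (Fin d)) R :=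
      fun n => by simpa using hR n
    obtain ⟨F, hF⟩ := hcomp.exists_bound_of_continuousOn hfd.continuous.continuousOn
    have hFn : ∀ n, |f (θ n ω)| ≤ F := fun n => hF _ (hθS n)
    have hbu : IsBoundedUnder (· ≤ ·) atTop (fun n => f (θ n ω)) :=
      isBoundedUnder_of ⟨F, fun n => (abs_le.1 (hFn n)).2⟩
    have hbl : IsBoundedUnder (· ≥ ·) atTop (fun n => f (θ n ω)) :=
      isBoundedUnder_of ⟨-F, fun n => (abs_le.1 (hFn n)).1⟩
    have hfreq' : ∀ δ : ℝ, 0 < δ → ∃ᶠ n in atTop, f (θ n ω) < fhat ω + δ := by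
      intro δ hδ
      refine frequently_lt_of_liminf_lt hbu.isCoboundedUnder_ge ?_
      rw [← hfhat]; linarith
    have hev : ∀ δ : ℝ, 0 < δ → ∀ᶠ n in atTop, fhat ω - δ < f (θ n ω) := by
      intro δ hδ
      refine eventually_lt_of_lt_liminf ?_ hbl
      rw [← hfhat]; linarith
    have hclus : MapClusterPt (fhat ω) atTop (fun n => f (θ n ω)) := by
      rw [mapClusterPt_iff_frequently]
      intro s hs
      obtain ⟨δ, hδ, hball⟩ := Metric.mem_nhds_iff.1 hs
      refine ((hfreq' δ hδ).and_eventually (hev δ hδ)).mono fun n hn => hball ?_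
      rw [Metric.mem_ball, Real.dist_eq, abs_lt]
      exact ⟨by linarith [hn.2], by linarith [hn.1]⟩
    have hAR : ∀ x ∈ Ahat ω, ‖x‖ ≤ R := by
      intro x hx
      rw [hAhat] at hx
      have := Metric.isClosed_closedBall.mem_of_mapClusterPt hx (Eventually.of_forall hθS)
      simpa using this
    have hsub : (⋃ x ∈ Ahat ω, Metric.closedBall x (δl x / 2)) ⊆
        Metric.closedBall (0 : EuclideanSpace ℝ (Fin d)) (R + 1) := by
      intro y hy
      simp only [Set.mem_iUnion] at hy
      obtain ⟨x, hx, hy⟩ := hy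
      rw [mem_closedBall_zero_iff]
      rw [Metric.mem_closedBall, dist_eq_norm] at hy
      have h1 := hAR x hx
      have h2 := (hδl x).2
      have h3 := norm_add_le (y - x) x
      rw [sub_add_cancel] at h3
      linarith
    have hQc : IsCompact (Qhat ω) := by
      rw [hQhat]
      exact (isCompact_closedBall (0 : EuclideanSpace ℝ (Fin d)) (R + 1)).of_isClosed_subset
        isClosed_closure (closure_minimal hsub Metric.isClosed_closedBall)
    have hAQ : ∀ x ∈ Ahat ω, x ∈ Qhat ω := by
      intro x hx
      rw [hQhat]
      refine subset_closure (Set.mem_biUnion hx ?_)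
      exact Metric.mem_closedBall_self (by linarith [(hδl x).1])
    have hfQ : fhat ω ∈ f '' Qhat ω := by
      obtain ⟨ψ, hψ, hψt⟩ := MapClusterPt.tendsto_subseq hclus
      obtain ⟨x, _, φ, hφ, hφt⟩ := hcomp.tendsto_subseq (fun n => hθS (ψ n))
      refine ⟨x, hAQ x ?_, ?_⟩
      · rw [hAhat]
        exact MapClusterPt.of_comp ((hψ.comp hφ).tendsto_atTop) hφt.mapClusterPt
      · have h1 := (hfd.continuous.tendsto x).comp hφt
        have h2 := hψt.comp hφ.tendsto_atTop
        exact tendsto_nhds_unique h1 h2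
    have hinQ : ∀ᶠ n in atTop, θ n ω ∈ Qhat ω := by
      have hU : IsOpen (⋃ x ∈ Ahat ω, Metric.ball x (δl x / 2)) :=
        isOpen_biUnion fun _ _ => Metric.isOpen_ball
      have hev : ∀ᶠ n in atTop, θ n ω ∈ ⋃ x ∈ Ahat ω, Metric.ball x (δl x / 2) := by
        by_contra hcon
        have hfr : ∃ᶠ n in atTop, θ n ω ∈ Metric.closedBall (0 : EuclideanSpace ℝ (Fin d)) R \
            ⋃ x ∈ Ahat ω, Metric.ball x (δl x / 2) :=
          (not_eventually.1 hcon).mono fun n hn => ⟨hθS n, hn⟩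
        obtain ⟨x, hx, hxc⟩ := (hcomp.diff hU).exists_mapClusterPt_of_frequently hfr
        refine hx.2 (Set.mem_biUnion (x := x) ?_ (Metric.mem_ball_self (by linarith [(hδl x).1])))
        rw [hAhat]; exact hxc
      filter_upwards [hev] with n hn
      rw [hQhat]
      exact subset_closure (Set.iUnion₂_mono (fun x _ => Metric.ball_subset_closedBall) hn)
    obtain ⟨hδQ, hμQ, hMQ, hL⟩ := hLoj (Qhat ω) hQc (fhat ω) hfQ
    rw [← hμhat] at hμQ hL
    obtain ⟨C, hC1, hCa, hCb⟩ := sg_path f hfd hlip α hαpos (fun n => θ n ω) (fun n => ξ n ω)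
      (fun n => hrec n ω) hα0 γ hγ hαdiv R hR r hr (Xi ω) hXi0 hnz (fhat ω)
      (fun δ hδ => (hfreq' δ hδ).mono fun n hn => by linarith) (Qhat ω) hinQ
      (δQ (Qhat ω) (fhat ω)) (μhat ω) (MQ (Qhat ω) (fhat ω)) hδQ.1 hμQ.1 hμQ.2 hMQ hL
    refine ⟨C, hC1, fun _ _ ε hε c hc => ?_⟩
    rcases lt_or_ge (r * (2 - μhat ω)) 1 with hcase | hcase
    · have hor : μhat ω = 2 ∨ r < 1 / (2 - μhat ω) := by
        rcases hμQ.2.eq_or_lt with h | h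
        · exact Or.inl h
        · right; rw [lt_div_iff₀ (by linarith)]; exact hcase
      rw [hφe, if_pos hor] at hc
      have hp : phat ω = μhat ω * r := by
        rw [hphat]
        split_ifs with h
        · rw [min_eq_left]
          rw [le_div_iff₀ (by linarith)]; exact hcase.le
        · rfl
      rw [hp]
      exact hCa hcase (Xi ω + ε) (by linarith) c hc
    · have hμlt : μhat ω < 2 := by
        by_contra h
        have : 2 - μhat ω ≤ 0 := by linarith [not_lt.1 h]
        nlinarith
      have h2μ : 0 < 2 - μhat ω := by linarith
      have hle : 1 / (2 - μhat ω) ≤ r := by rw [div_le_iff₀ h2μ]; exact hcase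
      have hp : phat ω = μhat ω * (1 / (2 - μhat ω)) := by
        rw [hphat, if_pos hμlt, min_eq_right hle]
      have hφ : 1 ≤ φe ω ε := by
        rw [hφe, if_neg (by
          rintro (h | h)
          · exact hμlt.ne h
          · exact absurd h (not_lt.2 hle))]
        split_ifs <;> linarith
      have h1 : 1 ≤ φe ω ε ^ μhat ω := Real.one_le_rpow hφ (by linarith [hμQ.1])
      rw [hp]
      exact hCb hcase c (by nlinarith)
  choose C₇ hC₇ hC₇' using hpath
  refine ⟨C₇, hC₇, ?_⟩
  filter_upwards [hA12] with ω hω hωΛ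
  exact hC₇' ω hωΛ (hω hωΛ)
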